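/- arXiv:2004.06962 — 4 statements merged into one kernel-verified Lean document; each statement's English description precedes it below -/
import Mathlib

section
/- Let λ < 0, μ > 0, α₀ > 0 and β₀ ∈ ℝ. Let r : [0,∞) → ℝ be a twice continuously differentiable function with r(t) > 0 for all t ≥ 0, satisfying r''(t) = α₀²/r(t)³ + 2λα₀/r(t) − μ·r'(t) for all t ≥ 0, with r(0) = 1 and r'(0) = −β₀. Then r(t) → √(α₀/(−2λ)) and r'(t) → 0 as t → +∞. -/
open Filter Set

/-!
The equation is Newton's law with friction, `r'' = -V'(r) - μ r'`, for the potential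
`V r = a0² / (2 r²) - 2 λ a0 log r`, which in the focusing case blows up at both ends of `(0, ∞)`
and has `√(a0 / (-2 λ))` as its only critical point. The energy `r'² / 2 + V r` decreases at rate
`μ r'²`, so the trajectory is trapped in a compact subset of `(0, ∞)` and the energy converges.
Barbalat's lemma applied to the energy gives `r' → 0`; applied to `r'` it gives `r'' → 0`. Hence
`V' r → 0`, and by compactness `r` tends to the critical point.
-/

open scoped Topology RealInnerProductSpace

section Barbalat

variable {E : Type*} [NormedAddCommGroup E] [NormedSpace ℝ E] {f f' : ℝ → E}

theorem uniformContinuousOn_of_norm_hasDerivWithin_le {s : Set ℝ} {C : ℝ} (hs : Convex ℝ s)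
    (hf : ∀ t ∈ s, HasDerivWithinAt f (f' t) s t) (hC : ∀ t ∈ s, ‖f' t‖ ≤ C) :
    UniformContinuousOn f s :=
  (hs.lipschitzOnWith_of_nnnorm_hasDerivWithin_le hf (C := C.toNNReal) fun t ht ↦
    norm_toNNReal (a := f' t) ▸ Real.toNNReal_le_toNNReal (hC t ht)).uniformContinuousOn

theorem norm_sub_sub_smul_le_of_norm_hasDerivWithin_sub_le {s : Set ℝ} {c : E} {C x y : ℝ}
    (hf : ∀ t ∈ s, HasDerivWithinAt f (f' t) s t) (hC : ∀ t ∈ s, ‖f' t - c‖ ≤ C)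
    (hs : Convex ℝ s) (hx : x ∈ s) (hy : y ∈ s) :
    ‖f y - f x - (y - x) • c‖ ≤ C * ‖y - x‖ := by
  have hderiv : ∀ t ∈ s, HasDerivWithinAt (fun t ↦ f t - t • c) (f' t - c) s t := fun t ht ↦ by
    simpa using (hf t ht).fun_sub ((hasDerivWithinAt_id t s).smul_const c)
  convert! hs.norm_image_sub_le_of_norm_hasDerivWithin_le hderiv hC hx hy using 2
  rw [sub_smul]
  abel

/-- **Barbalat's lemma**. -/
theorem tendsto_zero_of_tendsto_of_uniformContinuousOn_deriv {a : ℝ} {l : E}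
    (hf : ∀ t ∈ Ici a, HasDerivWithinAt f (f' t) (Ici a) t)
    (hf' : UniformContinuousOn f' (Ici a)) (hl : Tendsto f atTop (𝓝 l)) :
    Tendsto f' atTop (𝓝 0) := by
  refine NormedAddGroup.tendsto_nhds_zero.2 fun ε hε ↦ ?_
  obtain ⟨δ, hδ, hδε⟩ := Metric.uniformContinuousOn_iff_le.1 hf' (ε / 2) (half_pos hε)
  have hincr : Tendsto (fun t ↦ f (t + δ) - f t) atTop (𝓝 0) := by
    simpa using (hl.comp (tendsto_atTop_add_const_right _ δ tendsto_id)).sub hl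
  filter_upwards [eventually_ge_atTop a,
    NormedAddGroup.tendsto_nhds_zero.1 hincr (δ * (ε / 2)) (by positivity)] with t ht hsmall
  have hsub : Icc t (t + δ) ⊆ Ici a := fun s hs ↦ ht.trans hs.1
  have hosc : ∀ s ∈ Icc t (t + δ), ‖f' s - f' t‖ ≤ ε / 2 := fun s hs ↦ by
    rw [← dist_eq_norm]
    refine hδε s (hsub hs) t ht ?_
    rw [Real.dist_eq, abs_of_nonneg (sub_nonneg.2 hs.1)]
    linarith [hs.2]
  have hmean := norm_sub_sub_smul_le_of_norm_hasDerivWithin_sub_le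
    (fun s hs ↦ (hf s (hsub hs)).mono hsub) hosc (convex_Icc t (t + δ))
    (left_mem_Icc.2 (by linarith)) (right_mem_Icc.2 (by linarith))
  rw [add_sub_cancel_left, Real.norm_of_nonneg hδ.le] at hmean
  have hscaled : δ * ‖f' t‖ < δ * ε := calc
    δ * ‖f' t‖ = ‖δ • f' t‖ := by rw [norm_smul, Real.norm_of_nonneg hδ.le]
    _ ≤ ‖f (t + δ) - f t‖ + ‖f (t + δ) - f t - δ • f' t‖ := norm_le_norm_add_norm_sub _ _
    _ < δ * ε := by linarith
  exact lt_of_mul_lt_mul_left hscaled hδ.le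

end Barbalat

section Convergence

theorem exists_tendsto_atTop_of_antitoneOn_Ici {ι α : Type*} [LinearOrder ι]
    [ConditionallyCompleteLattice α] [TopologicalSpace α] [InfConvergenceClass α] {f : ι → α}
    {a : ι} (hf : AntitoneOn f (Ici a)) (hbdd : BddBelow (f '' Ici a)) :
    ∃ l, Tendsto f atTop (𝓝 l) := by
  have hanti : Antitone fun t ↦ f (max a t) := fun s t hst ↦
    hf (le_max_left a s) (le_max_left a t) (max_le_max_left a hst)
  have hrange : range (fun t ↦ f (max a t)) ⊆ f '' Ici a :=
    range_subset_iff.2 fun t ↦ mem_image_of_mem f (le_max_left a t)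
  refine ⟨_, (tendsto_atTop_ciInf hanti (hbdd.mono hrange)).congr' ?_⟩
  filter_upwards [eventually_ge_atTop a] with t ht
  rw [max_eq_right ht]

theorem tendsto_of_tendsto_comp_of_unique_preimage {ι X Y : Type*} [TopologicalSpace X]
    [TopologicalSpace Y] [T2Space Y] {l : Filter ι} {f : ι → X} {g : X → Y} {K : Set X} {p : X}
    {z : Y} (hK : IsCompact K) (hg : ContinuousOn g K) (hf : ∀ᶠ i in l, f i ∈ K)
    (hgf : Tendsto (fun i ↦ g (f i)) l (𝓝 z)) (hp : ∀ y ∈ K, g y = z → y = p) :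
    Tendsto f l (𝓝 p) := by
  refine hK.tendsto_nhds_of_unique_mapClusterPt hf fun y hy hcluster ↦ hp y hy ?_
  obtain ⟨U, hUl, hU⟩ := mapClusterPt_iff_ultrafilter.1 hcluster
  have hUK : Tendsto f U (𝓝[K] y) := tendsto_nhdsWithin_iff.2 ⟨hU, hUl hf⟩
  exact tendsto_nhds_unique ((hg y hy).tendsto.comp hUK) (hgf.mono_left hUl)

theorem exists_Icc_of_le_of_tendsto_atTop {α β : Type*} [LinearOrder α] [TopologicalSpace α]
    [OrderTopology α] [NoMaxOrder α] [Preorder β] [NoMaxOrder β] {V : α → β} {a : α}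
    (ha : Tendsto V (𝓝[>] a) atTop) (htop : Tendsto V atTop atTop) (C : β) :
    ∃ m > a, ∃ M, ∀ x > a, V x ≤ C → x ∈ Icc m M := by
  obtain ⟨m, hm, hleft⟩ := mem_nhdsGT_iff_exists_Ioo_subset.1 (ha.eventually_gt_atTop C)
  have : Nonempty α := ⟨a⟩
  obtain ⟨M, hright⟩ := eventually_atTop.1 (htop.eventually_gt_atTop C)
  refine ⟨m, hm, M, fun x hx hxC ↦ ⟨?_, ?_⟩⟩
  · exact not_lt.1 fun hxm ↦ (hleft ⟨hx, hxm⟩).not_ge hxC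
  · exact not_lt.1 fun hMx ↦ (hright x hMx.le).not_ge hxC

end Convergence

section DampedGradient

variable {E : Type*} [NormedAddCommGroup E]

/-- `x` is a trajectory on `[0, ∞)`, with velocity `v`, of the damped Newton equation
`x'' = -G x - μ x'`; at time `0` the derivatives are one-sided. -/
structure IsDampedTrajectory [NormedSpace ℝ E] (G : E → E) (μ : ℝ) (x v : ℝ → E) : Prop where
  position : ∀ t ∈ Ici (0 : ℝ), HasDerivWithinAt x (v t) (Ici 0) t
  velocity : ∀ t ∈ Ici (0 : ℝ), HasDerivWithinAt v (-G (x t) - μ • v t) (Ici 0) t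

/-- The sum of the kinetic and the potential energy of a unit mass at `y` with velocity `w`: the
Lyapunov function of the damped Newton equation with force `-∇V`. -/
noncomputable def mechanicalEnergy (V : E → ℝ) (y w : E) : ℝ :=
  ‖w‖ ^ 2 / 2 + V y

theorem le_mechanicalEnergy (V : E → ℝ) (y w : E) : V y ≤ mechanicalEnergy V y w :=
  le_add_of_nonneg_left (by positivity)

variable [InnerProductSpace ℝ E] [CompleteSpace E] {V : E → ℝ} {G : E → E} {K : Set E}

theorem bddBelow_image_of_hasGradientAt (hK : IsCompact K)
    (hV : ∀ y ∈ K, HasGradientAt V (G y) y) : BddBelow (V '' K) :=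
  hK.bddBelow_image fun y hy ↦ (hV y hy).continuousAt.continuousWithinAt

namespace IsDampedTrajectory

variable {μ : ℝ} {x v : ℝ → E}

theorem hasDerivWithinAt_mechanicalEnergy (h : IsDampedTrajectory G μ x v)
    (hV : ∀ y ∈ K, HasGradientAt V (G y) y) (hxK : MapsTo x (Ici 0) K) {t : ℝ}
    (ht : t ∈ Ici 0) :
    HasDerivWithinAt (fun t ↦ mechanicalEnergy V (x t) (v t)) (-μ * ‖v t‖ ^ 2) (Ici 0) t := by
  have hkinetic := (h.velocity t ht).norm_sq.div_const 2
  have hpotential : HasDerivWithinAt (fun t ↦ V (x t)) ⟪G (x t), v t⟫ (Ici 0) t :=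
    (hV _ (hxK ht)).hasFDerivAt.comp_hasDerivWithinAt t (h.position t ht)
  refine (hkinetic.add hpotential).congr_deriv ?_
  rw [inner_sub_right, inner_neg_right, inner_smul_right, real_inner_self_eq_norm_sq,
    real_inner_comm (v t)]
  ring

theorem antitoneOn_mechanicalEnergy (h : IsDampedTrajectory G μ x v) (hμ : 0 ≤ μ)
    (hV : ∀ y ∈ K, HasGradientAt V (G y) y) (hxK : MapsTo x (Ici 0) K) :
    AntitoneOn (fun t ↦ mechanicalEnergy V (x t) (v t)) (Ici 0) := by
  have hderiv := fun t ht ↦ h.hasDerivWithinAt_mechanicalEnergy hV hxK (t := t) ht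
  refine antitoneOn_of_hasDerivWithinAt_nonpos (convex_Ici 0)
    (fun t ht ↦ (hderiv t ht).continuousWithinAt)
    (fun t ht ↦ (hderiv t (interior_subset ht)).mono interior_subset) fun t _ ↦ ?_
  exact mul_nonpos_of_nonpos_of_nonneg (neg_nonpos.2 hμ) (by positivity)

theorem exists_tendsto_mechanicalEnergy (h : IsDampedTrajectory G μ x v) (hμ : 0 ≤ μ)
    (hK : IsCompact K) (hV : ∀ y ∈ K, HasGradientAt V (G y) y) (hxK : MapsTo x (Ici 0) K) :
    ∃ l, Tendsto (fun t ↦ mechanicalEnergy V (x t) (v t)) atTop (𝓝 l) := by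
  obtain ⟨m, hm⟩ := bddBelow_image_of_hasGradientAt hK hV
  refine exists_tendsto_atTop_of_antitoneOn_Ici (h.antitoneOn_mechanicalEnergy hμ hV hxK)
    ⟨m, forall_mem_image.2 fun t ht ↦ ?_⟩
  exact (hm (mem_image_of_mem V (hxK ht))).trans (le_mechanicalEnergy V _ _)

theorem exists_norm_velocity_le (h : IsDampedTrajectory G μ x v) (hμ : 0 ≤ μ)
    (hK : IsCompact K) (hV : ∀ y ∈ K, HasGradientAt V (G y) y) (hxK : MapsTo x (Ici 0) K) :
    ∃ C, ∀ t ∈ Ici (0 : ℝ), ‖v t‖ ≤ C := by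
  obtain ⟨m, hm⟩ := bddBelow_image_of_hasGradientAt hK hV
  refine ⟨√(2 * (mechanicalEnergy V (x 0) (v 0) - m)), fun t ht ↦ Real.le_sqrt_of_sq_le ?_⟩
  have henergy : mechanicalEnergy V (x t) (v t) ≤ mechanicalEnergy V (x 0) (v 0) :=
    h.antitoneOn_mechanicalEnergy hμ hV hxK self_mem_Ici ht ht
  have hmV : m ≤ V (x t) := hm (mem_image_of_mem V (hxK ht))
  rw [mechanicalEnergy] at henergy
  linarith

theorem exists_norm_acceleration_le (h : IsDampedTrajectory G μ x v) (hμ : 0 ≤ μ)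
    (hK : IsCompact K) (hV : ∀ y ∈ K, HasGradientAt V (G y) y) (hG : ContinuousOn G K)
    (hxK : MapsTo x (Ici 0) K) :
    ∃ C, ∀ t ∈ Ici (0 : ℝ), ‖-G (x t) - μ • v t‖ ≤ C := by
  obtain ⟨Cv, hCv⟩ := h.exists_norm_velocity_le hμ hK hV hxK
  obtain ⟨CG, hCG⟩ := hK.exists_bound_of_continuousOn hG
  refine ⟨CG + μ * Cv, fun t ht ↦ (norm_sub_le _ _).trans ?_⟩
  rw [norm_neg, norm_smul, Real.norm_of_nonneg hμ]
  gcongr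
  exacts [hCG _ (hxK ht), hCv t ht]

theorem uniformContinuousOn_norm_velocity_sq (h : IsDampedTrajectory G μ x v) (hμ : 0 ≤ μ)
    (hK : IsCompact K) (hV : ∀ y ∈ K, HasGradientAt V (G y) y) (hG : ContinuousOn G K)
    (hxK : MapsTo x (Ici 0) K) : UniformContinuousOn (fun t ↦ ‖v t‖ ^ 2) (Ici 0) := by
  obtain ⟨Cv, hCv⟩ := h.exists_norm_velocity_le hμ hK hV hxK
  obtain ⟨Ca, hCa⟩ := h.exists_norm_acceleration_le hμ hK hV hG hxK
  refine uniformContinuousOn_of_norm_hasDerivWithin_le (convex_Ici 0)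
    (fun t ht ↦ (h.velocity t ht).norm_sq) (C := 2 * (Cv * Ca)) fun t ht ↦ ?_
  rw [norm_mul, Real.norm_ofNat]
  gcongr
  exact (norm_inner_le_norm _ _).trans
    (mul_le_mul (hCv t ht) (hCa t ht) (norm_nonneg _) ((norm_nonneg _).trans (hCv t ht)))

theorem uniformContinuousOn_acceleration (h : IsDampedTrajectory G μ x v) (hμ : 0 ≤ μ)
    (hK : IsCompact K) (hV : ∀ y ∈ K, HasGradientAt V (G y) y) (hG : ContinuousOn G K)
    (hxK : MapsTo x (Ici 0) K) :
    UniformContinuousOn (fun t ↦ -G (x t) - μ • v t) (Ici 0) := by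
  obtain ⟨Cv, hCv⟩ := h.exists_norm_velocity_le hμ hK hV hxK
  obtain ⟨Ca, hCa⟩ := h.exists_norm_acceleration_le hμ hK hV hG hxK
  have hx : UniformContinuousOn x (Ici 0) :=
    uniformContinuousOn_of_norm_hasDerivWithin_le (convex_Ici 0) h.position hCv
  have hv : UniformContinuousOn v (Ici 0) :=
    uniformContinuousOn_of_norm_hasDerivWithin_le (convex_Ici 0) h.velocity hCa
  have hGx : UniformContinuousOn (G ∘ x) (Ici 0) :=
    (hK.uniformContinuousOn_of_continuous hG).comp hx hxK
  rw [uniformContinuousOn_iff_restrict] at hv hGx ⊢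
  exact hGx.neg.sub (hv.const_smul μ)

theorem tendsto_velocity (h : IsDampedTrajectory G μ x v) (hμ : 0 < μ) (hK : IsCompact K)
    (hV : ∀ y ∈ K, HasGradientAt V (G y) y) (hG : ContinuousOn G K)
    (hxK : MapsTo x (Ici 0) K) : Tendsto v atTop (𝓝 0) := by
  obtain ⟨l, hl⟩ := h.exists_tendsto_mechanicalEnergy hμ.le hK hV hxK
  have huniform : UniformContinuousOn (fun t ↦ -μ * ‖v t‖ ^ 2) (Ici 0) :=
    (uniformContinuous_const_smul (-μ)).comp_uniformContinuousOn
      (h.uniformContinuousOn_norm_velocity_sq hμ.le hK hV hG hxK)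
  have hdissipation : Tendsto (fun t ↦ -μ * ‖v t‖ ^ 2) atTop (𝓝 0) :=
    tendsto_zero_of_tendsto_of_uniformContinuousOn_deriv
      (fun t ht ↦ h.hasDerivWithinAt_mechanicalEnergy hV hxK ht) huniform hl
  have hsq : Tendsto (fun t ↦ ‖v t‖ ^ 2) atTop (𝓝 0) := by
    simpa [hμ.ne'] using hdissipation.const_mul (-μ)⁻¹
  exact tendsto_zero_iff_norm_tendsto_zero.2 (by simpa using hsq.sqrt)

theorem tendsto_gradient (h : IsDampedTrajectory G μ x v) (hμ : 0 < μ) (hK : IsCompact K)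
    (hV : ∀ y ∈ K, HasGradientAt V (G y) y) (hG : ContinuousOn G K)
    (hxK : MapsTo x (Ici 0) K) : Tendsto (fun t ↦ G (x t)) atTop (𝓝 0) := by
  have hv := h.tendsto_velocity hμ hK hV hG hxK
  have hacc : Tendsto (fun t ↦ -G (x t) - μ • v t) atTop (𝓝 0) :=
    tendsto_zero_of_tendsto_of_uniformContinuousOn_deriv h.velocity
      (h.uniformContinuousOn_acceleration hμ.le hK hV hG hxK) hv
  simpa using (hacc.add (hv.const_smul μ)).neg

theorem tendsto_critical_point (h : IsDampedTrajectory G μ x v) (hμ : 0 < μ)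
    (hK : IsCompact K) (hV : ∀ y ∈ K, HasGradientAt V (G y) y) (hG : ContinuousOn G K)
    (hxK : MapsTo x (Ici 0) K) {p : E} (hp : ∀ y ∈ K, G y = 0 → y = p) :
    Tendsto x atTop (𝓝 p) :=
  tendsto_of_tendsto_comp_of_unique_preimage hK hG ((eventually_ge_atTop 0).mono hxK)
    (h.tendsto_gradient hμ hK hV hG hxK) hp

end IsDampedTrajectory

end DampedGradient

section Width

/-- The potential of the Gaussian width: the width equation is `r'' = -V'(r) - μ r'` with
`V = widthPotential (a0 ^ 2) (-2 * lam * a0)`. Only its values on `(0, ∞)` are meaningful. -/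
noncomputable def widthPotential (A c r : ℝ) : ℝ :=
  A / (2 * r ^ 2) + c * Real.log r

/-- The derivative of `widthPotential A c` on `(0, ∞)`. -/
noncomputable def widthGradient (A c r : ℝ) : ℝ :=
  c / r - A / r ^ 3

variable {A c r : ℝ}

theorem hasGradientAt_widthPotential (hr : r ≠ 0) :
    HasGradientAt (widthPotential A c) (widthGradient A c r) r := by
  have hinv : HasDerivAt (fun s : ℝ ↦ A / (2 * s ^ 2)) (-A / r ^ 3) r := by
    refine ((hasDerivAt_const r A).fun_div (((hasDerivAt_id r).fun_pow 2).const_mul 2)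
      (by simpa using hr)).congr_deriv ?_
    simp only [id]
    field_simp
    ring
  have hlog : HasDerivAt (fun s ↦ c * Real.log s) (c * r⁻¹) r :=
    (Real.hasDerivAt_log hr).const_mul c
  refine ((hinv.add hlog).congr_deriv ?_).hasGradientAt'
  rw [widthGradient]
  ring

theorem continuousOn_widthGradient : ContinuousOn (widthGradient A c) (Ioi 0) := by
  have hne : ∀ r ∈ Ioi (0 : ℝ), r ≠ 0 := fun r hr ↦ hr.ne'
  exact (continuousOn_const.div continuousOn_id hne).sub
    (continuousOn_const.div (continuousOn_id.pow 3) fun r hr ↦ pow_ne_zero 3 (hne r hr))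

theorem eq_sqrt_of_widthGradient_eq_zero (hc : c ≠ 0) (hr : 0 < r)
    (h : widthGradient A c r = 0) : r = √(A / c) := by
  rw [widthGradient, sub_eq_zero] at h
  have hsq : A / c = r ^ 2 := by
    field_simp at h ⊢
    exact h.symm
  rw [hsq, Real.sqrt_sq hr.le]

theorem tendsto_widthPotential_atTop (hA : 0 ≤ A) (hc : 0 < c) :
    Tendsto (widthPotential A c) atTop atTop :=
  tendsto_atTop_mono (fun r ↦ le_add_of_nonneg_left (by positivity))
    (Real.tendsto_log_atTop.const_mul_atTop hc)

theorem tendsto_widthPotential_nhdsGT_zero (hA : 0 < A) :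
    Tendsto (widthPotential A c) (𝓝[>] 0) atTop := by
  have hlog : Tendsto (fun r : ℝ ↦ A / 2 + c * (Real.log r * r ^ 2)) (𝓝[>] 0) (𝓝 (A / 2)) := by
    simpa using
      ((tendsto_log_mul_rpow_nhdsGT_zero (zero_lt_two' ℝ)).const_mul c).const_add (A / 2)
  have hinv : Tendsto (fun r : ℝ ↦ r⁻¹ ^ 2) (𝓝[>] 0) atTop :=
    (tendsto_pow_atTop two_ne_zero).comp tendsto_inv_nhdsGT_zero
  refine (hlog.pos_mul_atTop (half_pos hA) hinv).congr' ?_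
  filter_upwards [self_mem_nhdsWithin] with r hr
  have hr0 : r ≠ 0 := hr.ne'
  rw [widthPotential]
  field_simp

theorem IsDampedTrajectory.exists_mapsTo_Icc {μ : ℝ} {r v : ℝ → ℝ}
    (h : IsDampedTrajectory (widthGradient A c) μ r v) (hA : 0 < A) (hc : 0 < c) (hμ : 0 ≤ μ)
    (hpos : MapsTo r (Ici 0) (Ioi 0)) : ∃ m > 0, ∃ M, MapsTo r (Ici 0) (Icc m M) := by
  obtain ⟨m, hm, M, hmM⟩ := exists_Icc_of_le_of_tendsto_atTop
    (tendsto_widthPotential_nhdsGT_zero (c := c) hA) (tendsto_widthPotential_atTop hA.le hc)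
    (mechanicalEnergy (widthPotential A c) (r 0) (v 0))
  refine ⟨m, hm, M, fun t ht ↦ hmM (r t) (hpos ht) ?_⟩
  exact (le_mechanicalEnergy _ _ _).trans <| h.antitoneOn_mechanicalEnergy hμ
    (fun y hy ↦ hasGradientAt_widthPotential (ne_of_gt hy)) hpos self_mem_Ici ht ht

theorem IsDampedTrajectory.tendsto_width {μ : ℝ} {r v : ℝ → ℝ}
    (h : IsDampedTrajectory (widthGradient A c) μ r v) (hA : 0 < A) (hc : 0 < c) (hμ : 0 < μ)
    (hpos : MapsTo r (Ici 0) (Ioi 0)) :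
    Tendsto r atTop (𝓝 √(A / c)) ∧ Tendsto v atTop (𝓝 0) := by
  obtain ⟨m, hm, M, htrap⟩ := h.exists_mapsTo_Icc hA hc hμ.le hpos
  have hIcc : Icc m M ⊆ Ioi 0 := fun y hy ↦ hm.trans_le hy.1
  have hV : ∀ y ∈ Icc m M, HasGradientAt (widthPotential A c) (widthGradient A c y) y :=
    fun y hy ↦ hasGradientAt_widthPotential (ne_of_gt (hIcc hy))
  have hG : ContinuousOn (widthGradient A c) (Icc m M) := continuousOn_widthGradient.mono hIcc
  exact ⟨h.tendsto_critical_point hμ isCompact_Icc hV hG htrap fun y hy ↦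
    eq_sqrt_of_widthGradient_eq_zero hc.ne' (hIcc hy),
    h.tendsto_velocity hμ isCompact_Icc hV hG htrap⟩

end Width

theorem gaussian_width_focusing_asymptotics_general
    {lam mu a0 : ℝ} (hlam : lam < 0) (hmu : 0 < mu) (ha0 : 0 < a0) {r r' r'' : ℝ → ℝ}
    (hpos : ∀ t ∈ Ici (0 : ℝ), 0 < r t)
    (hr1 : ∀ t ∈ Ici (0 : ℝ), HasDerivWithinAt r (r' t) (Ici 0) t)
    (hr2 : ∀ t ∈ Ici (0 : ℝ), HasDerivWithinAt r' (r'' t) (Ici 0) t)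
    (hode : ∀ t ∈ Ici (0 : ℝ),
      r'' t = a0 ^ 2 / (r t) ^ 3 + 2 * lam * a0 / r t - mu * r' t) :
    Tendsto r atTop (𝓝 √(a0 / (-2 * lam))) ∧ Tendsto r' atTop (𝓝 0) := by
  have htraj : IsDampedTrajectory (widthGradient (a0 ^ 2) (-2 * lam * a0)) mu r r' := by
    refine ⟨hr1, fun t ht ↦ (hr2 t ht).congr_deriv ?_⟩
    rw [hode t ht, widthGradient, smul_eq_mul]
    ring
  have hequilibrium : a0 ^ 2 / (-2 * lam * a0) = a0 / (-2 * lam) := by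
    rw [sq, mul_div_mul_right _ _ ha0.ne']
  rw [← hequilibrium]
  exact htraj.tendsto_width (by positivity) (mul_pos (by linarith) ha0) hmu hpos

/-- **Focusing-case asymptotics of the Gaussian width ODE.**
If `λ < 0`, `μ > 0`, `α₀ > 0`, and `r : [0,∞) → ℝ` is a positive, twice continuously
differentiable solution of `r'' = α₀²/r³ + 2λα₀/r − μ r'` with `r 0 = 1`, `r' 0 = −β₀`,
then `r(t) → √(α₀/(−2λ))` and `r'(t) → 0` as `t → +∞`. -/
theorem gaussian_width_focusing_asymptotics
    (lam mu a0 b0 : ℝ) (hlam : lam < 0) (hmu : 0 < mu) (ha0 : 0 < a0)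
    (r r' r'' : ℝ → ℝ)
    (hpos : ∀ t ∈ Ici (0:ℝ), 0 < r t)
    (hr1 : ∀ t ∈ Ici (0:ℝ), HasDerivWithinAt r (r' t) (Ici 0) t)
    (hr2 : ∀ t ∈ Ici (0:ℝ), HasDerivWithinAt r' (r'' t) (Ici 0) t)
    (hcont : ContinuousOn r'' (Ici 0))
    (hode : ∀ t ∈ Ici (0:ℝ),
      r'' t = a0 ^ 2 / (r t) ^ 3 + 2 * lam * a0 / r t - mu * r' t)
    (hr0 : r 0 = 1) (hr'0 : r' 0 = -b0) :
    Tendsto r atTop (nhds (Real.sqrt (a0 / (-2 * lam)))) ∧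
    Tendsto r' atTop (nhds 0) :=
  gaussian_width_focusing_asymptotics_general hlam hmu ha0 hpos hr1 hr2 hode
end

section
/- Let λ > 0, μ > 0, α₀ > 0 and β₀ ∈ ℝ. Let r : [0,∞) → ℝ be a twice continuously differentiable function with r(t) > 0 for all t ≥ 0, satisfying r''(t) = α₀²/r(t)³ + 2λα₀/r(t) − μ·r'(t) for all t ≥ 0, with r(0) = 1 and r'(0) = −β₀. Then r(t)/√t → 2√(λα₀/μ) and √t·r'(t) → √(λα₀/μ) as t → +∞. -/
open Filter Set

/-!
Write the equation as `r'' = F(r) - μ r'` with `x F(x) ≥ m > 0` and `x F(x) → 2κ`. The product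
`y = r r'` satisfies the linear equation `y' = r'² + r F(r) - μ y`, whose forcing term is at least
`m`. Hence `(r²)' = 2y` is eventually bounded below by a positive constant, so `r → ∞`. Then
`F(r) → 0`, so `r' → 0`, the forcing term of `y` tends to `2κ`, and `y → 2κ / μ`. Integrating,
`r² ∼ 4κt / μ`. The limits for the linear equations and the final integration are all instances of
l'Hôpital's rule of type `∞ / ∞`.
-/

open scoped Topology

section LHopital

variable {f f' g g' : ℝ → ℝ}

lemma eventually_lt_div_of_mul_deriv_le {c m : ℝ}
    (hf : ∀ᶠ t in atTop, HasDerivAt f (f' t) t) (hg : ∀ᶠ t in atTop, HasDerivAt g (g' t) t)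
    (hle : ∀ᶠ t in atTop, m * g' t ≤ f' t) (hg_top : Tendsto g atTop atTop) (hcm : c < m) :
    ∀ᶠ t in atTop, c < f t / g t := by
  obtain ⟨T, hT⟩ := eventually_atTop.1 (hf.and (hg.and hle))
  have hderiv : ∀ t ∈ Ici T, HasDerivAt (fun t => f t - m * g t) (f' t - m * g' t) t :=
    fun t ht => (hT t ht).1.sub ((hT t ht).2.1.const_mul m)
  have hmono : MonotoneOn (fun t => f t - m * g t) (Ici T) :=
    monotoneOn_of_hasDerivWithinAt_nonneg (convex_Ici T)
      (fun t ht => (hderiv t ht).continuousAt.continuousWithinAt)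
      (fun t ht => (hderiv t (interior_subset ht)).hasDerivWithinAt)
      (fun t ht => sub_nonneg.2 (hT t (interior_subset ht)).2.2)
  have hgap : ∀ᶠ t in atTop, m * g T - f T < (m - c) * g t :=
    (hg_top.const_mul_atTop (sub_pos.2 hcm)).eventually_gt_atTop _
  filter_upwards [eventually_ge_atTop T, hgap, hg_top.eventually_gt_atTop 0]
    with t hTt hgap_t hg_pos
  have hincr : f T - m * g T ≤ f t - m * g t := hmono self_mem_Ici hTt hTt
  rw [lt_div_iff₀ hg_pos]
  linarith

theorem tendsto_div_atTop_of_tendsto_deriv_div {L : ℝ}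
    (hf : ∀ᶠ t in atTop, HasDerivAt f (f' t) t) (hg : ∀ᶠ t in atTop, HasDerivAt g (g' t) t)
    (hg'_pos : ∀ᶠ t in atTop, 0 < g' t) (hg_top : Tendsto g atTop atTop)
    (hL : Tendsto (fun t => f' t / g' t) atTop (𝓝 L)) :
    Tendsto (fun t => f t / g t) atTop (𝓝 L) := by
  refine tendsto_order.2 ⟨fun c hc => ?_, fun c hc => ?_⟩
  · obtain ⟨m, hcm, hmL⟩ := exists_between hc
    refine eventually_lt_div_of_mul_deriv_le hf hg ?_ hg_top hcm
    filter_upwards [hL.eventually_const_lt hmL, hg'_pos] with t ht hpos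
    exact ((lt_div_iff₀ hpos).1 ht).le
  · obtain ⟨m, hLm, hmc⟩ := exists_between hc
    have hneg : ∀ᶠ t in atTop, -c < -f t / g t := by
      refine eventually_lt_div_of_mul_deriv_le (hf.mono fun t ht => ht.fun_neg) hg ?_ hg_top
        (neg_lt_neg hmc)
      filter_upwards [hL.eventually_lt_const hLm, hg'_pos] with t ht hpos
      linarith [(div_lt_iff₀ hpos).1 ht]
    filter_upwards [hneg] with t ht
    rwa [neg_div, neg_lt_neg_iff] at ht

end LHopital

section LinearODE

variable {u g : ℝ → ℝ} {μ : ℝ}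

lemma hasDerivAt_exp_const_mul (μ t : ℝ) :
    HasDerivAt (fun t => Real.exp (μ * t)) (μ * Real.exp (μ * t)) t := by
  simpa [mul_comm] using ((hasDerivAt_id t).const_mul μ).exp

lemma tendsto_exp_const_mul_atTop (hμ : 0 < μ) :
    Tendsto (fun t => Real.exp (μ * t)) atTop atTop :=
  Real.tendsto_exp_atTop.comp (tendsto_id.const_mul_atTop hμ)

lemma hasDerivAt_mul_exp_of_linear {t : ℝ} (hu : HasDerivAt u (g t - μ * u t) t) :
    HasDerivAt (fun t => u t * Real.exp (μ * t)) (g t * Real.exp (μ * t)) t :=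
  (hu.fun_mul (hasDerivAt_exp_const_mul μ t)).congr_deriv (by ring)

lemma eventually_lt_of_linear_of_forcing_ge {c m : ℝ} (hμ : 0 < μ)
    (hu : ∀ᶠ t in atTop, HasDerivAt u (g t - μ * u t) t) (hg : ∀ᶠ t in atTop, m ≤ g t)
    (hc : c < m / μ) : ∀ᶠ t in atTop, c < u t := by
  have hquot : ∀ᶠ t in atTop, c < u t * Real.exp (μ * t) / Real.exp (μ * t) := by
    refine eventually_lt_div_of_mul_deriv_le (hu.mono fun t => hasDerivAt_mul_exp_of_linear)
      (.of_forall (hasDerivAt_exp_const_mul μ)) ?_ (tendsto_exp_const_mul_atTop hμ) hc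
    filter_upwards [hg] with t ht
    rw [← mul_assoc, div_mul_cancel₀ _ hμ.ne']
    gcongr
  simpa only [mul_div_cancel_right₀ _ (Real.exp_ne_zero _)] using hquot

lemma tendsto_of_linear_of_tendsto_forcing {G : ℝ} (hμ : 0 < μ)
    (hu : ∀ᶠ t in atTop, HasDerivAt u (g t - μ * u t) t) (hg : Tendsto g atTop (𝓝 G)) :
    Tendsto u atTop (𝓝 (G / μ)) := by
  have hquot : Tendsto (fun t => u t * Real.exp (μ * t) / Real.exp (μ * t)) atTop (𝓝 (G / μ)) := by
    refine tendsto_div_atTop_of_tendsto_deriv_div (hu.mono fun t => hasDerivAt_mul_exp_of_linear)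
      (.of_forall (hasDerivAt_exp_const_mul μ)) (.of_forall fun t => by positivity)
      (tendsto_exp_const_mul_atTop hμ) ?_
    simpa only [mul_div_mul_right _ _ (Real.exp_ne_zero _)] using hg.div_const μ
  simpa only [mul_div_cancel_right₀ _ (Real.exp_ne_zero _)] using hquot

end LinearODE

lemma tendsto_div_sqrt_of_tendsto_sq_div {r : ℝ → ℝ} {L : ℝ} (hL : 0 ≤ L)
    (hr : ∀ᶠ t in atTop, 0 < r t) (h : Tendsto (fun t => r t ^ 2 / t) atTop (𝓝 (L ^ 2))) :
    Tendsto (fun t => r t / √t) atTop (𝓝 L) := by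
  have hsqrt := h.sqrt
  rw [Real.sqrt_sq hL] at hsqrt
  refine hsqrt.congr' ?_
  filter_upwards [hr] with t ht
  rw [Real.sqrt_div (sq_nonneg _), Real.sqrt_sq ht.le]

section DampedMotion

variable {F r r' : ℝ → ℝ} {μ m k : ℝ}

lemma hasDerivAt_sq_of_hasDerivAt {t : ℝ} (hr₁ : HasDerivAt r (r' t) t) :
    HasDerivAt (fun t => r t ^ 2) (2 * (r t * r' t)) t :=
  (hr₁.fun_pow 2).congr_deriv (by push_cast; ring)

lemma hasDerivAt_mul_velocity {t : ℝ} (hr₁ : HasDerivAt r (r' t) t)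
    (hr₂ : HasDerivAt r' (F (r t) - μ * r' t) t) :
    HasDerivAt (fun t => r t * r' t) (r' t ^ 2 + r t * F (r t) - μ * (r t * r' t)) t :=
  (hr₁.fun_mul hr₂).congr_deriv (by ring)

lemma tendsto_atTop_of_damped (hμ : 0 < μ) (hm : 0 < m) (hF_ge : ∀ x > 0, m ≤ x * F x)
    (hr : ∀ᶠ t in atTop, 0 < r t) (hr₁ : ∀ᶠ t in atTop, HasDerivAt r (r' t) t)
    (hr₂ : ∀ᶠ t in atTop, HasDerivAt r' (F (r t) - μ * r' t) t) :
    Tendsto r atTop atTop := by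
  have hforcing : ∀ᶠ t in atTop, m ≤ r' t ^ 2 + r t * F (r t) :=
    hr.mono fun t ht => le_add_of_nonneg_of_le (sq_nonneg _) (hF_ge _ ht)
  have hmul_gt : ∀ᶠ t in atTop, m / μ / 2 < r t * r' t :=
    eventually_lt_of_linear_of_forcing_ge hμ
      ((hr₁.and hr₂).mono fun t ht => hasDerivAt_mul_velocity ht.1 ht.2) hforcing
      (half_lt_self (by positivity))
  have hsq_gt : ∀ᶠ t in atTop, m / μ / 2 < r t ^ 2 / t := by
    refine eventually_lt_div_of_mul_deriv_le (m := m / μ)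
      (hr₁.mono fun t => hasDerivAt_sq_of_hasDerivAt) (.of_forall hasDerivAt_id') ?_ tendsto_id
      (half_lt_self (by positivity))
    filter_upwards [hmul_gt] with t ht
    linarith
  have hsq_top : Tendsto (fun t => r t ^ 2) atTop atTop := by
    refine tendsto_atTop_mono' _ ?_ (tendsto_id.const_mul_atTop (show 0 < m / μ / 2 by positivity))
    filter_upwards [hsq_gt, eventually_gt_atTop 0] with t ht hpos
    exact ((lt_div_iff₀ hpos).1 ht).le
  refine (Real.tendsto_sqrt_atTop.comp hsq_top).congr' ?_
  filter_upwards [hr] with t ht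
  exact Real.sqrt_sq ht.le

lemma tendsto_zero_of_tendsto_id_mul (hF : Tendsto (fun x => x * F x) atTop (𝓝 k)) :
    Tendsto F atTop (𝓝 0) := by
  refine (hF.div_atTop tendsto_id).congr' ?_
  filter_upwards [eventually_ne_atTop 0] with x hx
  exact mul_div_cancel_left₀ _ hx

lemma tendsto_velocity_zero_of_damped (hμ : 0 < μ) (hF : Tendsto F atTop (𝓝 0))
    (hr_top : Tendsto r atTop atTop)
    (hr₂ : ∀ᶠ t in atTop, HasDerivAt r' (F (r t) - μ * r' t) t) :
    Tendsto r' atTop (𝓝 0) := by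
  simpa only [zero_div] using tendsto_of_linear_of_tendsto_forcing hμ hr₂ (hF.comp hr_top)

lemma tendsto_mul_velocity_of_damped (hμ : 0 < μ) (hF : Tendsto (fun x => x * F x) atTop (𝓝 k))
    (hr_top : Tendsto r atTop atTop) (hr₁ : ∀ᶠ t in atTop, HasDerivAt r (r' t) t)
    (hr₂ : ∀ᶠ t in atTop, HasDerivAt r' (F (r t) - μ * r' t) t) :
    Tendsto (fun t => r t * r' t) atTop (𝓝 (k / μ)) := by
  have hr' : Tendsto r' atTop (𝓝 0) :=
    tendsto_velocity_zero_of_damped hμ (tendsto_zero_of_tendsto_id_mul hF) hr_top hr₂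
  have hforcing : Tendsto (fun t => r' t ^ 2 + r t * F (r t)) atTop (𝓝 k) := by
    simpa using (hr'.pow 2).add (hF.comp hr_top)
  exact tendsto_of_linear_of_tendsto_forcing hμ
    ((hr₁.and hr₂).mono fun t ht => hasDerivAt_mul_velocity ht.1 ht.2) hforcing

lemma tendsto_sq_div_of_tendsto_mul_velocity (hr₁ : ∀ᶠ t in atTop, HasDerivAt r (r' t) t)
    (h : Tendsto (fun t => r t * r' t) atTop (𝓝 k)) :
    Tendsto (fun t => r t ^ 2 / t) atTop (𝓝 (2 * k)) :=
  tendsto_div_atTop_of_tendsto_deriv_div (hr₁.mono fun t => hasDerivAt_sq_of_hasDerivAt)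
    (.of_forall hasDerivAt_id') (.of_forall fun _ => one_pos) tendsto_id
    (by simpa only [div_one] using h.const_mul 2)

lemma tendsto_sqrt_mul_velocity {L : ℝ} (hr : ∀ᶠ t in atTop, 0 < r t) (hL : L ≠ 0)
    (hdiv : Tendsto (fun t => r t / √t) atTop (𝓝 L))
    (hmul : Tendsto (fun t => r t * r' t) atTop (𝓝 k)) :
    Tendsto (fun t => √t * r' t) atTop (𝓝 (k / L)) := by
  refine (hmul.div hdiv hL).congr' ?_
  filter_upwards [hr] with t ht
  simp only [Pi.div_apply]
  field_simp

theorem gaussian_width_defocusing_asymptotics_general {κ : ℝ} (hμ : 0 < μ) (hm : 0 < m)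
    (hF_ge : ∀ x > 0, m ≤ x * F x) (hF : Tendsto (fun x => x * F x) atTop (𝓝 (2 * κ)))
    (hr : ∀ᶠ t in atTop, 0 < r t) (hr₁ : ∀ᶠ t in atTop, HasDerivAt r (r' t) t)
    (hr₂ : ∀ᶠ t in atTop, HasDerivAt r' (F (r t) - μ * r' t) t) :
    Tendsto (fun t => r t / √t) atTop (𝓝 (2 * √(κ / μ))) ∧
      Tendsto (fun t => √t * r' t) atTop (𝓝 (√(κ / μ))) := by
  have hκ : 0 < κ := by
    have hm_le : m ≤ 2 * κ := ge_of_tendsto hF ((eventually_gt_atTop 0).mono hF_ge)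
    linarith
  have hsqrt_sq : √(κ / μ) ^ 2 = κ / μ := Real.sq_sqrt (by positivity)
  have hmul : Tendsto (fun t => r t * r' t) atTop (𝓝 (2 * κ / μ)) :=
    tendsto_mul_velocity_of_damped hμ hF (tendsto_atTop_of_damped hμ hm hF_ge hr hr₁ hr₂) hr₁ hr₂
  have hdiv : Tendsto (fun t => r t / √t) atTop (𝓝 (2 * √(κ / μ))) := by
    refine tendsto_div_sqrt_of_tendsto_sq_div (by positivity) hr ?_
    convert tendsto_sq_div_of_tendsto_mul_velocity hr₁ hmul using 2
    linear_combination 4 * hsqrt_sq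
  refine ⟨hdiv, ?_⟩
  convert tendsto_sqrt_mul_velocity hr (by positivity) hdiv hmul using 2
  rw [eq_div_iff (by positivity)]
  linear_combination 2 * hsqrt_sq

end DampedMotion

section GaussianWidthForce

/-- The force `α² / x³ + 2λα / x` in the equation `r'' = F(r) - μ r'` for the width `r` of a
Gaussian solution of the Schrödinger–Langevin equation. -/
noncomputable def gaussianWidthForce (lam a x : ℝ) : ℝ :=
  a ^ 2 / x ^ 3 + 2 * lam * a / x

variable (lam a : ℝ)

lemma mul_gaussianWidthForce {x : ℝ} (hx : x ≠ 0) :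
    x * gaussianWidthForce lam a x = 2 * (lam * a) + a ^ 2 / x ^ 2 := by
  unfold gaussianWidthForce
  field_simp
  ring

lemma le_mul_gaussianWidthForce {x : ℝ} (hx : x ≠ 0) :
    2 * (lam * a) ≤ x * gaussianWidthForce lam a x := by
  rw [mul_gaussianWidthForce lam a hx]
  exact le_add_of_nonneg_right (by positivity)

lemma tendsto_mul_gaussianWidthForce :
    Tendsto (fun x => x * gaussianWidthForce lam a x) atTop (𝓝 (2 * (lam * a))) := by
  have hsum : Tendsto (fun x : ℝ => 2 * (lam * a) + a ^ 2 / x ^ 2) atTop (𝓝 (2 * (lam * a))) := by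
    simpa only [add_zero] using
      ((tendsto_pow_atTop two_ne_zero).const_div_atTop (a ^ 2)).const_add (2 * (lam * a))
  refine hsum.congr' ?_
  filter_upwards [eventually_ne_atTop 0] with x hx
  exact (mul_gaussianWidthForce lam a hx).symm

end GaussianWidthForce

lemma eventually_hasDerivAt_of_hasDerivWithinAt_Ici {f f' : ℝ → ℝ} {a : ℝ}
    (hf : ∀ t ∈ Ici a, HasDerivWithinAt f (f' t) (Ici a) t) :
    ∀ᶠ t in atTop, HasDerivAt f (f' t) t :=
  (eventually_gt_atTop a).mono fun t ht => (hf t ht.le).hasDerivAt (Ici_mem_nhds ht)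

/-- **Defocusing-case asymptotics of the Gaussian width ODE.**
If `λ > 0`, `μ > 0`, `α₀ > 0`, and `r : [0,∞) → ℝ` is a positive, twice continuously
differentiable solution of `r'' = α₀²/r³ + 2λα₀/r − μ r'` with `r 0 = 1`, `r' 0 = −β₀`,
then `r(t)/√t → 2√(λα₀/μ)` and `√t · r'(t) → √(λα₀/μ)` as `t → +∞`. -/
theorem gaussian_width_defocusing_asymptotics
    (lam mu a0 b0 : ℝ) (hlam : 0 < lam) (hmu : 0 < mu) (ha0 : 0 < a0)
    (r r' r'' : ℝ → ℝ)
    (hpos : ∀ t ∈ Ici (0:ℝ), 0 < r t)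
    (hr1 : ∀ t ∈ Ici (0:ℝ), HasDerivWithinAt r (r' t) (Ici 0) t)
    (hr2 : ∀ t ∈ Ici (0:ℝ), HasDerivWithinAt r' (r'' t) (Ici 0) t)
    (hcont : ContinuousOn r'' (Ici 0))
    (hode : ∀ t ∈ Ici (0:ℝ),
      r'' t = a0 ^ 2 / (r t) ^ 3 + 2 * lam * a0 / r t - mu * r' t)
    (hr0 : r 0 = 1) (hr'0 : r' 0 = -b0) :
    Tendsto (fun t => r t / Real.sqrt t) atTop (nhds (2 * Real.sqrt (lam * a0 / mu))) ∧
    Tendsto (fun t => Real.sqrt t * r' t) atTop (nhds (Real.sqrt (lam * a0 / mu))) := by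
  have hr_ode : ∀ᶠ t in atTop,
      HasDerivAt r' (gaussianWidthForce lam a0 (r t) - mu * r' t) t :=
    eventually_hasDerivAt_of_hasDerivWithinAt_Ici fun t ht => hode t ht ▸ hr2 t ht
  exact gaussian_width_defocusing_asymptotics_general hmu (by positivity : 0 < 2 * (lam * a0))
    (fun x hx => le_mul_gaussianWidthForce lam a0 hx.ne') (tendsto_mul_gaussianWidthForce lam a0)
    ((eventually_ge_atTop 0).mono hpos) (eventually_hasDerivAt_of_hasDerivWithinAt_Ici hr1) hr_ode
end

section
/- Let λ ∈ ℝ, μ > 0, α₀ > 0, and let r : [0,∞) → ℝ be twice continuously differentiable with r(t) > 0 for all t ≥ 0 and r(0) = 1. Define a : [0,∞) → ℂ by a(t) = α₀/r(t)² − i·r'(t)/r(t). Then a satisfies the Riccati-type equation i·a'(t) − a(t)² = 2λ·Re(a(t)) + μ·Im(a(t)) for all t ≥ 0 if and only if r satisfies r''(t) = α₀²/r(t)³ + 2λα₀/r(t) − μ·r'(t) for all t ≥ 0. -/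
open Set

/-!
Split the Riccati equation into real and imaginary parts. The imaginary part reads
`Re a' = 2 Re a Im a`, which holds identically for `a = α/r² − i r'/r`: this is why the real part
of `a` is chosen to be `α/r²`. The real part reads
`−Im a' = (Re a)² − (Im a)² + 2λ Re a + μ Im a`. Since `Im a = −r'/r` is minus a logarithmic
derivative, the quadratic terms in `r'` cancel and what remains is the equation for `r''`
divided by `r`.
-/

section Pointwise

variable {lam mu α ρ v w : ℝ}

/-- The quadratic coefficient `α/ρ² − i v/ρ` of a Gaussian `exp (-a x² / 2)`, parametrized by
its width `ρ` and the velocity `v` of the width; `α` is its real part at width `1`. -/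
noncomputable def gaussianCoeff (α ρ v : ℝ) : ℂ :=
  ((α / ρ ^ 2 : ℝ) : ℂ) - Complex.I * ((v / ρ : ℝ) : ℂ)

theorem gaussianCoeff_re : (gaussianCoeff α ρ v).re = α / ρ ^ 2 := by
  simp only [gaussianCoeff, Complex.sub_re, Complex.ofReal_re, Complex.I_mul_re,
    Complex.ofReal_im, neg_zero, sub_zero]

theorem gaussianCoeff_im : (gaussianCoeff α ρ v).im = -(v / ρ) := by
  simp only [gaussianCoeff, Complex.sub_im, Complex.ofReal_im, Complex.I_mul_im,
    Complex.ofReal_re, zero_sub]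

theorem riccati_iff_re_im (a a' : ℂ) :
    Complex.I * a' - a ^ 2 = 2 * (lam : ℂ) * (a.re : ℂ) + (mu : ℂ) * (a.im : ℂ) ↔
      a'.re = 2 * a.re * a.im ∧
        -a'.im = a.re ^ 2 - a.im ^ 2 + 2 * lam * a.re + mu * a.im := by
  have rhs_eq_ofReal : 2 * (lam : ℂ) * (a.re : ℂ) + (mu : ℂ) * (a.im : ℂ) =
      ((2 * lam * a.re + mu * a.im : ℝ) : ℂ) := by
    push_cast
    rfl
  simp only [rhs_eq_ofReal, Complex.ext_iff, sq, Complex.sub_re, Complex.sub_im, Complex.I_re,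
    Complex.I_im, Complex.mul_re, Complex.mul_im, Complex.ofReal_re, Complex.ofReal_im]
  constructor <;> rintro ⟨h₁, h₂⟩ <;> constructor <;> linarith

theorem riccati_gaussianCoeff_iff (hρ : ρ ≠ 0) {a' : ℂ}
    (hre : a'.re = -(2 * α * v) / ρ ^ 3) (him : a'.im = -((w * ρ - v * v) / ρ ^ 2)) :
    Complex.I * a' - gaussianCoeff α ρ v ^ 2 =
        2 * (lam : ℂ) * ((gaussianCoeff α ρ v).re : ℂ) +
          (mu : ℂ) * ((gaussianCoeff α ρ v).im : ℂ) ↔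
      w = α ^ 2 / ρ ^ 3 + 2 * lam * α / ρ - mu * v := by
  rw [riccati_iff_re_im, gaussianCoeff_re, gaussianCoeff_im, hre, him]
  have im_part : -(2 * α * v) / ρ ^ 3 = 2 * (α / ρ ^ 2) * -(v / ρ) := by
    field_simp
  have re_part_residual :
      - -((w * ρ - v * v) / ρ ^ 2) -
          ((α / ρ ^ 2) ^ 2 - (-(v / ρ)) ^ 2 + 2 * lam * (α / ρ ^ 2) + mu * -(v / ρ)) =
        (w - (α ^ 2 / ρ ^ 3 + 2 * lam * α / ρ - mu * v)) / ρ := by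
    field_simp
    ring
  rw [and_iff_right im_part, ← sub_eq_zero, re_part_residual, div_eq_zero_iff,
    or_iff_left hρ, sub_eq_zero]

end Pointwise

section Derivative

variable {r v : ℝ → ℝ} {s : Set ℝ} {t r' v' : ℝ}

theorem hasDerivWithinAt_const_div_sq (α : ℝ) (hr : HasDerivWithinAt r r' s t) (hne : r t ≠ 0) :
    HasDerivWithinAt (fun τ => α / r τ ^ 2) (-(2 * α * r') / r t ^ 3) s t := by
  refine ((hasDerivWithinAt_const t s α).fun_div (hr.fun_pow 2) (pow_ne_zero 2 hne)).congr_deriv ?_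
  field_simp
  push_cast
  ring

theorem hasDerivWithinAt_gaussianCoeff (α : ℝ) (hr : HasDerivWithinAt r r' s t)
    (hv : HasDerivWithinAt v v' s t) (hne : r t ≠ 0) :
    HasDerivWithinAt (fun τ => gaussianCoeff α (r τ) (v τ))
      ⟨-(2 * α * r') / r t ^ 3, -((v' * r t - v t * r') / r t ^ 2)⟩ s t := by
  have re_deriv := (hasDerivWithinAt_const_div_sq α hr hne).ofReal_comp
  have im_deriv := (hv.fun_div hr hne).ofReal_comp
  refine (re_deriv.fun_sub (im_deriv.const_mul Complex.I)).congr_deriv ?_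
  apply Complex.ext
  · simp only [Complex.sub_re, Complex.ofReal_re, Complex.I_mul_re, Complex.ofReal_im, neg_zero,
      sub_zero]
  · simp only [Complex.sub_im, Complex.ofReal_im, Complex.I_mul_im, Complex.ofReal_re, zero_sub]

end Derivative

theorem riccati_iff_width_ode_general (lam mu α : ℝ) {s : Set ℝ} (hs : UniqueDiffOn ℝ s)
    {r r' r'' : ℝ → ℝ} (hne : ∀ t ∈ s, r t ≠ 0)
    (hr : ∀ t ∈ s, HasDerivWithinAt r (r' t) s t)
    (hr' : ∀ t ∈ s, HasDerivWithinAt r' (r'' t) s t)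
    {a a' : ℝ → ℂ} (ha : ∀ t ∈ s, a t = gaussianCoeff α (r t) (r' t))
    (ha' : ∀ t ∈ s, HasDerivWithinAt a (a' t) s t) :
    (∀ t ∈ s, Complex.I * a' t - a t ^ 2 =
        2 * (lam : ℂ) * ((a t).re : ℂ) + (mu : ℂ) * ((a t).im : ℂ)) ↔
      ∀ t ∈ s, r'' t = α ^ 2 / r t ^ 3 + 2 * lam * α / r t - mu * r' t := by
  refine forall₂_congr fun t ht => ?_
  have a_deriv :=
    (hasDerivWithinAt_gaussianCoeff α (hr t ht) (hr' t ht) (hne t ht)).congr ha (ha t ht)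
  have a'_eq := (hs t ht).eq_deriv _ (ha' t ht) a_deriv
  rw [ha t ht]
  exact riccati_gaussianCoeff_iff (hne t ht) (congrArg Complex.re a'_eq)
    (congrArg Complex.im a'_eq)

/-- **Equivalence between the Riccati equation for `a` and the width ODE for `r`.**
With `a(t) = α₀/r(t)² − i r'(t)/r(t)` built from a positive, twice continuously
differentiable `r` on `[0,∞)` with `r(0) = 1`, the coefficient `a` satisfies
`i a' − a² = 2λ Re a + μ Im a` on `[0,∞)` if and only if `r` satisfies
`r'' = α₀²/r³ + 2λα₀/r − μ r'` on `[0,∞)`. -/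
theorem riccati_iff_width_ode
    (lam mu a0 : ℝ) (hmu : 0 < mu) (ha0 : 0 < a0)
    (r r' r'' : ℝ → ℝ)
    (hpos : ∀ t ∈ Ici (0:ℝ), 0 < r t)
    (hr1 : ∀ t ∈ Ici (0:ℝ), HasDerivWithinAt r (r' t) (Ici 0) t)
    (hr2 : ∀ t ∈ Ici (0:ℝ), HasDerivWithinAt r' (r'' t) (Ici 0) t)
    (hcont : ContinuousOn r'' (Ici 0))
    (hr0 : r 0 = 1)
    (a a' : ℝ → ℂ)
    (ha : ∀ t, a t = ((a0 / (r t) ^ 2 : ℝ) : ℂ) - Complex.I * ((r' t / r t : ℝ) : ℂ))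
    (ha' : ∀ t ∈ Ici (0:ℝ), HasDerivWithinAt a (a' t) (Ici 0) t) :
    (∀ t ∈ Ici (0:ℝ),
      Complex.I * a' t - (a t) ^ 2
        = 2 * (lam : ℂ) * (((a t).re : ℝ) : ℂ) + (mu : ℂ) * (((a t).im : ℝ) : ℂ)) ↔
    (∀ t ∈ Ici (0:ℝ),
      r'' t = a0 ^ 2 / (r t) ^ 3 + 2 * lam * a0 / r t - mu * r' t) := by
  exact riccati_iff_width_ode_general lam mu a0 (uniqueDiffOn_Ici 0)
    (fun t ht => (hpos t ht).ne') hr1 hr2 (fun t _ => ha t) ha'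
end

section
/- Let d ≥ 1, λ < 0 and ω ∈ ℝ. The Gausson φ : ℝ^d → ℝ defined by φ(x) = exp( d/2 − ω/(2λ) )·exp( λ|x|² ) is a strictly positive, smooth solution of the semilinear elliptic equation −(1/2)·Δφ(x) + ω·φ(x) + λ·φ(x)·log(φ(x)²) = 0 for all x ∈ ℝ^d. -/
/-- The Laplacian of a scalar function on `ℝ^d`, as the sum of second partial
derivatives in the coordinate directions. -/
noncomputable def euclideanLaplacian {d : ℕ} (f : EuclideanSpace ℝ (Fin d) → ℝ)
    (x : EuclideanSpace ℝ (Fin d)) : ℝ :=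
  ∑ i, fderiv ℝ (fun y => fderiv ℝ f y (EuclideanSpace.single i 1)) x
    (EuclideanSpace.single i 1)

/-!
Write a positive function as `φ = exp u`. Since `Δ (exp u) = exp u * (Δ u + |∇u|²)` and
`log (φ²) = 2 u`, the equation `-½ Δφ + ω φ + λ φ log (φ²) = 0` is equivalent to
`Δ u + |∇u|² = 2 ω + 4 λ u`. For a radial quadratic `u = a + b |x|²` on a `d`-dimensional space the
left-hand side is `2 b d + 4 b² |x|²`, so comparing coefficients gives `b = λ` and
`a = d / 2 - ω / (2 λ)`, which is the logarithm of the Gausson.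
-/

open Module
open scoped Laplacian Topology

theorem fderiv_fderiv_comp_apply {𝕜 E F : Type*} [NontriviallyNormedField 𝕜]
    [NormedAddCommGroup E] [NormedSpace 𝕜 E] [NormedAddCommGroup F] [NormedSpace 𝕜 F]
    {g : 𝕜 → F} {u : E → 𝕜} {x : E} (hg : ContDiffAt 𝕜 2 g (u x)) (hu : ContDiffAt 𝕜 2 u x)
    (v w : E) :
    fderiv 𝕜 (fun y => fderiv 𝕜 (g ∘ u) y v) x w =
      fderiv 𝕜 (fun y => fderiv 𝕜 u y v) x w • deriv g (u x) +
        (fderiv 𝕜 u x v * fderiv 𝕜 u x w) • deriv (deriv g) (u x) := by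
  have first_derivative : (fun y => fderiv 𝕜 (g ∘ u) y v) =ᶠ[𝓝 x]
      fun y => fderiv 𝕜 u y v • deriv g (u y) := by
    filter_upwards [hu.eventually (by simp),
      hu.continuousAt.eventually (hg.eventually (by simp))] with y huy hgy
    rw [fderiv_comp y (hgy.differentiableAt two_ne_zero) (huy.differentiableAt two_ne_zero),
      ContinuousLinearMap.comp_apply, fderiv_eq_smul_deriv]
  have hdu : DifferentiableAt 𝕜 (fun y => fderiv 𝕜 u y v) x :=
    ((hu.fderiv_right (m := 1) le_rfl).differentiableAt one_ne_zero).clm_apply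
      (differentiableAt_const v)
  have hdg : DifferentiableAt 𝕜 (deriv g) (u x) :=
    (hg.derivWithin (m := 1) le_rfl).differentiableAt one_ne_zero
  have hdgu : HasFDerivAt (fun y => deriv g (u y))
      ((fderiv 𝕜 (deriv g) (u x)).comp (fderiv 𝕜 u x)) x :=
    hdg.hasFDerivAt.comp x (hu.differentiableAt two_ne_zero).hasFDerivAt
  rw [first_derivative.fderiv_eq, (hdu.hasFDerivAt.fun_smul hdgu).fderiv]
  simp [fderiv_eq_smul_deriv, mul_smul, add_comm]

section Laplacian

variable {E F : Type*} [NormedAddCommGroup E] [InnerProductSpace ℝ E] [FiniteDimensional ℝ E]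
  [NormedAddCommGroup F] [NormedSpace ℝ F] {x : E}

theorem laplacian_eq_sum_fderiv_fderiv {ι : Type*} [Fintype ι] (v : OrthonormalBasis ι ℝ E)
    {f : E → F} (hf : ContDiffAt ℝ 2 f x) :
    Δ f x = ∑ i, fderiv ℝ (fun y => fderiv ℝ f y (v i)) x (v i) := by
  have hdf : DifferentiableAt ℝ (fderiv ℝ f) x :=
    (hf.fderiv_right (m := 1) le_rfl).differentiableAt one_ne_zero
  rw [InnerProductSpace.laplacian_eq_iteratedFDeriv_orthonormalBasis f v]
  refine Finset.sum_congr rfl fun i _ => ?_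
  rw [iteratedFDeriv_two_apply, fderiv_clm_apply hdf (differentiableAt_const _)]
  simp

theorem laplacian_comp {g : ℝ → F} {u : E → ℝ} (hg : ContDiffAt ℝ 2 g (u x))
    (hu : ContDiffAt ℝ 2 u x) :
    Δ (g ∘ u) x = Δ u x • deriv g (u x) + ‖fderiv ℝ u x‖ ^ 2 • deriv (deriv g) (u x) := by
  let v := stdOrthonormalBasis ℝ E
  rw [laplacian_eq_sum_fderiv_fderiv v (hg.comp x hu), laplacian_eq_sum_fderiv_fderiv v hu,
    v.norm_dual, Finset.sum_smul, Finset.sum_smul, ← Finset.sum_add_distrib]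
  refine Finset.sum_congr rfl fun i _ => ?_
  rw [fderiv_fderiv_comp_apply hg hu, sq]

theorem laplacian_exp {u : E → ℝ} (hu : ContDiffAt ℝ 2 u x) :
    Δ (fun y => Real.exp (u y)) x = Real.exp (u x) * (Δ u x + ‖fderiv ℝ u x‖ ^ 2) := by
  have h := laplacian_comp Real.contDiff_exp.contDiffAt hu
  rw [Real.deriv_exp, Real.deriv_exp, ← add_smul, smul_eq_mul, mul_comm] at h
  exact h

theorem exp_solves_logarithmic_elliptic_iff {u : E → ℝ} (hu : ContDiffAt ℝ 2 u x) (lam ω : ℝ) :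
    -(1 / 2) * Δ (fun y => Real.exp (u y)) x + ω * Real.exp (u x)
        + lam * Real.exp (u x) * Real.log (Real.exp (u x) ^ 2) = 0 ↔
      Δ u x + ‖fderiv ℝ u x‖ ^ 2 = 2 * ω + 4 * lam * u x := by
  have hlog : Real.log (Real.exp (u x) ^ 2) = 2 * u x := by
    rw [Real.log_pow, Real.log_exp, Nat.cast_ofNat]
  have factorization :
      -(1 / 2) * Δ (fun y => Real.exp (u y)) x + ω * Real.exp (u x)
          + lam * Real.exp (u x) * Real.log (Real.exp (u x) ^ 2) =
        -(1 / 2) * Real.exp (u x) *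
          (Δ u x + ‖fderiv ℝ u x‖ ^ 2 - (2 * ω + 4 * lam * u x)) := by
    rw [laplacian_exp hu, hlog]
    ring
  rw [factorization, mul_eq_zero_iff_left (by simp), sub_eq_zero]

end Laplacian

section RadialQuadratic

variable {E : Type*} [NormedAddCommGroup E] [InnerProductSpace ℝ E]

theorem contDiff_const_add_mul_norm_sq {n : WithTop ℕ∞} (a b : ℝ) :
    ContDiff ℝ n fun y : E => a + b * ‖y‖ ^ 2 :=
  contDiff_const.add (contDiff_const.mul (contDiff_norm_sq ℝ))

theorem fderiv_const_add_mul_norm_sq (a b : ℝ) (x : E) :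
    fderiv ℝ (fun y : E => a + b * ‖y‖ ^ 2) x = (2 * b) • innerSL ℝ x := by
  rw [(((hasStrictFDerivAt_norm_sq x).hasFDerivAt.const_mul b).const_add a).fderiv]
  module

theorem sq_norm_fderiv_const_add_mul_norm_sq (a b : ℝ) (x : E) :
    ‖fderiv ℝ (fun y : E => a + b * ‖y‖ ^ 2) x‖ ^ 2 = 4 * b ^ 2 * ‖x‖ ^ 2 := by
  rw [fderiv_const_add_mul_norm_sq, norm_smul, innerSL_apply_norm, mul_pow, Real.norm_eq_abs,
    sq_abs]
  ring

theorem laplacian_const_add_mul_norm_sq [FiniteDimensional ℝ E] (a b : ℝ) (x : E) :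
    Δ (fun y : E => a + b * ‖y‖ ^ 2) x = 2 * b * finrank ℝ E := by
  let v := stdOrthonormalBasis ℝ E
  have first_derivative (i) : (fun y => fderiv ℝ (fun z : E => a + b * ‖z‖ ^ 2) y (v i)) =
      ⇑((2 * b) • innerSL ℝ (v i)) := by
    ext y
    rw [fderiv_const_add_mul_norm_sq, smul_apply, smul_apply, innerSL_apply_apply,
      innerSL_apply_apply, real_inner_comm]
  have second_derivative (i) :
      fderiv ℝ (fun y => fderiv ℝ (fun z : E => a + b * ‖z‖ ^ 2) y (v i)) x (v i) = 2 * b := by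
    rw [first_derivative, ContinuousLinearMap.fderiv]
    simp
  rw [laplacian_eq_sum_fderiv_fderiv v (contDiff_const_add_mul_norm_sq a b).contDiffAt]
  simp only [second_derivative, Finset.sum_const, Finset.card_univ, Fintype.card_fin, nsmul_eq_mul]
  ring

end RadialQuadratic

theorem euclideanLaplacian_eq_laplacian {d : ℕ} {f : EuclideanSpace ℝ (Fin d) → ℝ}
    {x : EuclideanSpace ℝ (Fin d)} (hf : ContDiffAt ℝ 2 f x) :
    euclideanLaplacian f x = Δ f x := by
  simp only [laplacian_eq_sum_fderiv_fderiv (EuclideanSpace.basisFun (Fin d) ℝ) hf,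
    EuclideanSpace.basisFun_apply, euclideanLaplacian]

theorem gausson_solves_elliptic_equation_general {E : Type*} [NormedAddCommGroup E]
    [InnerProductSpace ℝ E] [FiniteDimensional ℝ E] {lam : ℝ} (hlam : lam ≠ 0) (ω : ℝ) :
    let φ : E → ℝ :=
      fun x => Real.exp ((finrank ℝ E : ℝ) / 2 - ω / (2 * lam)) * Real.exp (lam * ‖x‖ ^ 2)
    (∀ x, 0 < φ x) ∧ ContDiff ℝ (⊤ : ℕ∞) φ ∧
    (∀ x, -(1 / 2) * Δ φ x + ω * φ x + lam * φ x * Real.log ((φ x) ^ 2) = 0) := by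
  simp only [← Real.exp_add]
  refine ⟨fun x => Real.exp_pos _, (contDiff_const_add_mul_norm_sq _ lam).exp, fun x => ?_⟩
  rw [exp_solves_logarithmic_elliptic_iff (contDiff_const_add_mul_norm_sq _ lam).contDiffAt,
    laplacian_const_add_mul_norm_sq, sq_norm_fderiv_const_add_mul_norm_sq]
  field_simp
  ring

/-- **The Gausson solves the logarithmic elliptic equation.**
For `λ < 0` and `ω ∈ ℝ`, the Gausson `φ(x) = exp(d/2 − ω/(2λ)) exp(λ|x|²)` is a
strictly positive smooth solution of `−½Δφ + ωφ + λφ log(φ²) = 0` on `ℝ^d`. -/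
theorem gausson_solves_elliptic_equation
    (d : ℕ) (hd : 1 ≤ d) (lam ω : ℝ) (hlam : lam < 0) :
    let φ : EuclideanSpace ℝ (Fin d) → ℝ :=
      fun x => Real.exp ((d : ℝ) / 2 - ω / (2 * lam)) * Real.exp (lam * ‖x‖ ^ 2)
    (∀ x, 0 < φ x) ∧ ContDiff ℝ (⊤ : ℕ∞) φ ∧
    (∀ x, -(1 / 2) * euclideanLaplacian φ x + ω * φ x
        + lam * φ x * Real.log ((φ x) ^ 2) = 0) := by
  obtain ⟨hpos, hsmooth, hsolves⟩ := finrank_euclideanSpace_fin (𝕜 := ℝ) (n := d) ▸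
    gausson_solves_elliptic_equation_general (E := EuclideanSpace ℝ (Fin d)) hlam.ne ω
  exact ⟨hpos, hsmooth, fun x =>
    euclideanLaplacian_eq_laplacian (contDiff_infty.1 hsmooth 2).contDiffAt ▸ hsolves x⟩
end
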